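/- Let λ > 0. For every x, t ∈ ℝ and every continuous function f : ℝ → ℝ with f ≥ 0, one has (τ_x^{λ+1} f)(t) + (τ_{−x}^{λ+1} f)(t) ≤ ((2λ+1)/(2λ)) · [ (τ_x^{λ} f)(t) + (τ_{−x}^{λ} f)(t) ]. -/

import Mathlib

/-!
Reflecting `θ ↦ -θ` in the integral for `-x` leaves `B(θ)` unchanged, so
`τ_x^μ f(t) + τ_{-x}^μ f(t)` is `c_μ` times the integral of
`2 f_e(B) + 2 f_o(B) (t + xθ)/B = f(B) (1 + r) + f(-B) (1 - r)`, with `r = (t + xθ)/B`, against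
`(1 - θ²)^{μ-1}`. As `B² = (t + xθ)² + x²(1 - θ²)`, one has `|r| ≤ 1`, so the integrand is
nonnegative when `f` is, and the weight decreases in `μ`. The constant is
`c_{λ+1} / c_λ = (2λ+1)/(2λ)`.
-/

open MeasureTheory intervalIntegral

noncomputable section

/-- Even part of `f`. -/
def evenPart (f : ℝ → ℝ) (s : ℝ) : ℝ := (f s + f (-s)) / 2

/-- Odd part of `f`. -/
def oddPart (f : ℝ → ℝ) (s : ℝ) : ℝ := (f s - f (-s)) / 2

/-- `B(θ) = √(x² + t² + 2xtθ)`. -/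
def Bq (x t θ : ℝ) : ℝ := Real.sqrt (x ^ 2 + t ^ 2 + 2 * x * t * θ)

/-- Normalizing constant `c_μ = Γ(μ+1/2)/(Γ(μ)Γ(1/2))`. -/
def cMu (μ : ℝ) : ℝ := Real.Gamma (μ + 1 / 2) / (Real.Gamma μ * Real.Gamma (1 / 2))

/-- The one-dimensional generalized (Dunkl) translation with parameter `μ`:
`(τ_x^μ f)(t) = c_μ ∫_{−1}^{1} [f_e(B(θ)) + f_o(B(θ))(x+t)/B(θ)] (1+θ)(1−θ²)^{μ−1} dθ`,
where the odd term is interpreted as `0` when `B(θ) = 0`. -/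
def tau1 (μ : ℝ) (f : ℝ → ℝ) (x t : ℝ) : ℝ :=
  cMu μ * ∫ θ in (-1 : ℝ)..1,
    (evenPart f (Bq x t θ) +
        (if Bq x t θ = 0 then 0 else oddPart f (Bq x t θ) * (x + t) / Bq x t θ)) *
      ((1 + θ) * (1 - θ ^ 2) ^ (μ - 1))


lemma cMu_pos {μ : ℝ} (hμ : 0 < μ) : 0 < cMu μ :=
  div_pos (Real.Gamma_pos_of_pos (by linarith))
    (mul_pos (Real.Gamma_pos_of_pos hμ) (Real.Gamma_pos_of_pos (by norm_num)))

lemma cMu_add_one_div_cMu {μ : ℝ} (hμ : 0 < μ) :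
    cMu (μ + 1) / cMu μ = (2 * μ + 1) / (2 * μ) := by
  rw [cMu, cMu, add_right_comm, Real.Gamma_add_one (by positivity : μ + 1 / 2 ≠ 0),
    Real.Gamma_add_one hμ.ne']
  field_simp

lemma abs_evenPart_le {f : ℝ → ℝ} {M s : ℝ} (hs : |f s| ≤ M) (hs' : |f (-s)| ≤ M) :
    |evenPart f s| ≤ M := by
  rw [abs_le] at hs hs' ⊢
  constructor <;> unfold evenPart <;> linarith

lemma abs_oddPart_le {f : ℝ → ℝ} {M s : ℝ} (hs : |f s| ≤ M) (hs' : |f (-s)| ≤ M) :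
    |oddPart f s| ≤ M := by
  rw [abs_le] at hs hs' ⊢
  constructor <;> unfold oddPart <;> linarith

section Radius

lemma Bq_nonneg (x t θ : ℝ) : 0 ≤ Bq x t θ := Real.sqrt_nonneg _

lemma Bq_neg_neg (x t θ : ℝ) : Bq (-x) t (-θ) = Bq x t θ := by
  simp only [Bq, neg_sq, mul_neg, neg_mul, neg_neg]

@[fun_prop]
lemma continuous_Bq (x t : ℝ) : Continuous (Bq x t) := by
  unfold Bq
  fun_prop

variable (x t : ℝ) {θ : ℝ}

lemma Bq_le_abs_add_abs (hθ : θ ∈ Set.Icc (-1) 1) : Bq x t θ ≤ |x| + |t| := by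
  have hxt : x * t * θ ≤ |x| * |t| :=
    calc x * t * θ ≤ |x * t * θ| := le_abs_self _
      _ = |x| * |t| * |θ| := by rw [abs_mul, abs_mul]
      _ ≤ |x| * |t| := mul_le_of_le_one_right (by positivity) (abs_le.2 hθ)
  refine Real.sqrt_le_iff.2 ⟨by positivity, ?_⟩
  linarith [add_sq |x| |t|, sq_abs x, sq_abs t]

lemma Bq_mem_Icc (hθ : θ ∈ Set.Icc (-1) 1) : Bq x t θ ∈ Set.Icc (-(|x| + |t|)) (|x| + |t|) :=
  abs_le.1 ((abs_of_nonneg (Bq_nonneg x t θ)).trans_le (Bq_le_abs_add_abs x t hθ))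

lemma neg_Bq_mem_Icc (hθ : θ ∈ Set.Icc (-1) 1) : -Bq x t θ ∈ Set.Icc (-(|x| + |t|)) (|x| + |t|) :=
  Set.neg_mem_Icc_iff.2 (by simpa only [neg_neg] using Bq_mem_Icc x t hθ)

lemma abs_add_mul_div_Bq_le_one (hθ : θ ∈ Set.Icc (-1) 1) : |(t + x * θ) / Bq x t θ| ≤ 1 := by
  have hle : |t + x * θ| ≤ Bq x t θ := Real.abs_le_sqrt <| by
    have : 0 ≤ x ^ 2 * ((1 - θ) * (1 + θ)) :=
      mul_nonneg (sq_nonneg x) (mul_nonneg (sub_nonneg.2 hθ.2) (by linarith [hθ.1]))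
    linarith
  rw [abs_div, abs_of_nonneg (Bq_nonneg x t θ)]
  exact div_le_one_of_le₀ hle (Bq_nonneg x t θ)

/-- The factor `1 + θ` compensates the possible vanishing of `Bq x t θ`, since
`2 B² - (x + t)² (1 + θ) = (1 - θ) (x - t)²`. -/
lemma abs_add_div_Bq_mul_one_add_le_two (hθ : θ ∈ Set.Icc (-1) 1) :
    |(x + t) / Bq x t θ * (1 + θ)| ≤ 2 := by
  have h_one_sub : 0 ≤ 1 - θ := sub_nonneg.2 hθ.2
  have h_one_add : 0 ≤ 1 + θ := by linarith [hθ.1]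
  have hle : |(x + t) * (1 + θ) / 2| ≤ Bq x t θ := Real.abs_le_sqrt <| by
    have : 0 ≤ (1 - θ) * (x - t) ^ 2 := by positivity
    have : 0 ≤ (x + t) ^ 2 * ((1 + θ) * (1 - θ)) := by positivity
    linarith
  rw [abs_div, abs_two, div_le_iff₀ two_pos] at hle
  rw [div_mul_eq_mul_div, abs_div, abs_of_nonneg (Bq_nonneg x t θ)]
  exact div_le_of_le_mul₀ (Bq_nonneg x t θ) zero_le_two (hle.trans_eq (mul_comm _ _))

end Radius

/-- The integrand of `tau1` without the weight `(1 - θ²)^(μ-1)`. At `Bq x t θ = 0` the odd term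
vanishes because division by zero gives `0`. -/
def dunklKernel (f : ℝ → ℝ) (x t θ : ℝ) : ℝ :=
  (evenPart f (Bq x t θ) + oddPart f (Bq x t θ) * ((x + t) / Bq x t θ)) * (1 + θ)

lemma tau1_eq_integral_dunklKernel (μ : ℝ) (f : ℝ → ℝ) (x t : ℝ) :
    tau1 μ f x t =
      cMu μ * ∫ θ in (-1 : ℝ)..1, dunklKernel f x t θ * (1 - θ ^ 2) ^ (μ - 1) := by
  have h_junk (a b y : ℝ) : (if b = 0 then 0 else a * y / b) = a * (y / b) := by
    split_ifs with hb
    · rw [hb, div_zero, mul_zero]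
    · exact mul_div_assoc a y b
  simp only [tau1, dunklKernel, h_junk, mul_assoc]

lemma measurable_dunklKernel {f : ℝ → ℝ} (hf : Measurable f) (x t : ℝ) :
    Measurable (dunklKernel f x t) := by
  unfold dunklKernel evenPart oddPart
  fun_prop

lemma abs_dunklKernel_le {f : ℝ → ℝ} {x t M θ : ℝ}
    (hfM : ∀ s ∈ Set.Icc (-(|x| + |t|)) (|x| + |t|), |f s| ≤ M) (hθ : θ ∈ Set.Icc (-1) 1) :
    |dunklKernel f x t θ| ≤ 4 * M := by
  have hB : |f (Bq x t θ)| ≤ M := hfM _ (Bq_mem_Icc x t hθ)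
  have hB' : |f (-Bq x t θ)| ≤ M := hfM _ (neg_Bq_mem_Icc x t hθ)
  have hM : 0 ≤ M := (abs_nonneg _).trans hB
  have hθ' : |1 + θ| ≤ 2 := abs_le.2 ⟨by linarith [hθ.1], by linarith [hθ.2]⟩
  rw [dunklKernel, add_mul, mul_assoc (oddPart _ _)]
  calc |evenPart f (Bq x t θ) * (1 + θ) +
        oddPart f (Bq x t θ) * ((x + t) / Bq x t θ * (1 + θ))|
      ≤ |evenPart f (Bq x t θ)| * |1 + θ| +
        |oddPart f (Bq x t θ)| * |(x + t) / Bq x t θ * (1 + θ)| :=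
        (abs_add_le _ _).trans_eq (by rw [abs_mul, abs_mul])
    _ ≤ M * 2 + M * 2 := by
        gcongr
        · exact abs_evenPart_le hB hB'
        · exact abs_oddPart_le hB hB'
        · exact abs_add_div_Bq_mul_one_add_le_two x t hθ
    _ = 4 * M := by ring

lemma dunklKernel_add_dunklKernel_neg_neg (f : ℝ → ℝ) (x t θ : ℝ) :
    dunklKernel f x t θ + dunklKernel f (-x) t (-θ) =
      f (Bq x t θ) * (1 + (t + x * θ) / Bq x t θ) +
        f (-Bq x t θ) * (1 - (t + x * θ) / Bq x t θ) := by
  rw [dunklKernel, dunklKernel, Bq_neg_neg, evenPart, oddPart]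
  ring

lemma dunklKernel_add_dunklKernel_neg_neg_nonneg {f : ℝ → ℝ} {x t θ : ℝ}
    (hf0 : ∀ s ∈ Set.Icc (-(|x| + |t|)) (|x| + |t|), 0 ≤ f s) (hθ : θ ∈ Set.Icc (-1) 1) :
    0 ≤ dunklKernel f x t θ + dunklKernel f (-x) t (-θ) := by
  obtain ⟨hr_ge, hr_le⟩ := abs_le.1 (abs_add_mul_div_Bq_le_one x t hθ)
  rw [dunklKernel_add_dunklKernel_neg_neg]
  exact add_nonneg (mul_nonneg (hf0 _ (Bq_mem_Icc x t hθ)) (by linarith))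
    (mul_nonneg (hf0 _ (neg_Bq_mem_Icc x t hθ)) (sub_nonneg.2 hr_le))

section Integral

lemma intervalIntegrable_one_sub_sq_rpow {r : ℝ} (hr : -1 < r) :
    IntervalIntegrable (fun θ : ℝ ↦ (1 - θ ^ 2) ^ r) volume (-1) 1 := by
  have h_one_sub : IntervalIntegrable (fun θ : ℝ ↦ (1 - θ) ^ r) volume 0 1 := by
    simpa using (intervalIntegrable_rpow' (a := 1) (b := 0) hr).comp_sub_left 1
  have h_one_add : ContinuousOn (fun θ : ℝ ↦ (1 + θ) ^ r) (Set.uIcc 0 1) := by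
    refine ContinuousOn.rpow_const (by fun_prop) fun θ hθ ↦ Or.inl ?_
    rw [Set.uIcc_of_le zero_le_one] at hθ
    linarith [hθ.1]
  have h_right : IntervalIntegrable (fun θ : ℝ ↦ (1 - θ ^ 2) ^ r) volume 0 1 := by
    refine (h_one_sub.mul_continuousOn h_one_add).congr fun θ hθ ↦ ?_
    rw [Set.uIoc_of_le zero_le_one] at hθ
    rw [← Real.mul_rpow (sub_nonneg.2 hθ.2) (by linarith [hθ.1])]
    ring_nf
  have h_left : IntervalIntegrable (fun θ : ℝ ↦ (1 - θ ^ 2) ^ r) volume (-1) 0 := by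
    simpa using ((IntervalIntegrable.iff_comp_neg enorm_ne_top).1 h_right).symm
  exact h_left.trans h_right

variable {μ : ℝ} {f : ℝ → ℝ} {x t M : ℝ}

lemma intervalIntegrable_dunklKernel_mul (hμ : 0 < μ) (hf : Measurable f)
    (hfM : ∀ s ∈ Set.Icc (-(|x| + |t|)) (|x| + |t|), |f s| ≤ M) :
    IntervalIntegrable (fun θ ↦ dunklKernel f x t θ * (1 - θ ^ 2) ^ (μ - 1)) volume (-1) 1 := by
  have hw := intervalIntegrable_one_sub_sq_rpow (r := μ - 1) (by linarith)
  rw [intervalIntegrable_iff_integrableOn_Ioc_of_le (by norm_num)] at hw ⊢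
  refine hw.bdd_mul (c := 4 * M) (measurable_dunklKernel hf x t).aestronglyMeasurable
    (ae_restrict_of_forall_mem measurableSet_Ioc fun θ hθ ↦ ?_)
  exact abs_dunklKernel_le hfM (Set.Ioc_subset_Icc_self hθ)

lemma intervalIntegrable_dunklKernel_neg_neg_mul (hμ : 0 < μ) (hf : Measurable f)
    (hfM : ∀ s ∈ Set.Icc (-(|x| + |t|)) (|x| + |t|), |f s| ≤ M) :
    IntervalIntegrable (fun θ ↦ dunklKernel f (-x) t (-θ) * (1 - θ ^ 2) ^ (μ - 1))
      volume (-1) 1 := by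
  rw [← abs_neg x] at hfM
  simpa using
    ((IntervalIntegrable.iff_comp_neg enorm_ne_top).1
      (intervalIntegrable_dunklKernel_mul hμ hf hfM)).symm

lemma intervalIntegrable_dunklKernel_add_mul (hμ : 0 < μ) (hf : Measurable f)
    (hfM : ∀ s ∈ Set.Icc (-(|x| + |t|)) (|x| + |t|), |f s| ≤ M) :
    IntervalIntegrable
      (fun θ ↦ (dunklKernel f x t θ + dunklKernel f (-x) t (-θ)) * (1 - θ ^ 2) ^ (μ - 1))
      volume (-1) 1 := by
  simpa only [add_mul] using (intervalIntegrable_dunklKernel_mul hμ hf hfM).add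
    (intervalIntegrable_dunklKernel_neg_neg_mul hμ hf hfM)

lemma tau1_neg_eq_integral_dunklKernel (μ : ℝ) (f : ℝ → ℝ) (x t : ℝ) :
    tau1 μ f (-x) t =
      cMu μ * ∫ θ in (-1 : ℝ)..1, dunklKernel f (-x) t (-θ) * (1 - θ ^ 2) ^ (μ - 1) := by
  have h_refl := integral_comp_neg (a := -1) (b := 1)
    (fun θ : ℝ ↦ dunklKernel f (-x) t θ * (1 - θ ^ 2) ^ (μ - 1))
  simp only [neg_neg, neg_sq] at h_refl
  rw [tau1_eq_integral_dunklKernel, h_refl]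

lemma tau1_add_tau1_neg (hμ : 0 < μ) (hf : Measurable f)
    (hfM : ∀ s ∈ Set.Icc (-(|x| + |t|)) (|x| + |t|), |f s| ≤ M) :
    tau1 μ f x t + tau1 μ f (-x) t = cMu μ * ∫ θ in (-1 : ℝ)..1,
      (dunklKernel f x t θ + dunklKernel f (-x) t (-θ)) * (1 - θ ^ 2) ^ (μ - 1) := by
  simp only [add_mul]
  rw [tau1_eq_integral_dunklKernel, tau1_neg_eq_integral_dunklKernel, ← mul_add,
    integral_add (intervalIntegrable_dunklKernel_mul hμ hf hfM)
      (intervalIntegrable_dunklKernel_neg_neg_mul hμ hf hfM)]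

end Integral

theorem tau1_succ_le_of_nonneg_general {μ ν : ℝ} (hμ : 0 < μ) (hμν : μ ≤ ν) {f : ℝ → ℝ}
    {x t : ℝ} (hf : Measurable f)
    (hf_bdd : BddAbove (f '' Set.Icc (-(|x| + |t|)) (|x| + |t|)))
    (hf0 : ∀ s ∈ Set.Icc (-(|x| + |t|)) (|x| + |t|), 0 ≤ f s) :
    tau1 ν f x t + tau1 ν f (-x) t ≤
      cMu ν / cMu μ * (tau1 μ f x t + tau1 μ f (-x) t) := by
  have hν : 0 < ν := hμ.trans_le hμν
  obtain ⟨M, hM⟩ := hf_bdd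
  have hfM : ∀ s ∈ Set.Icc (-(|x| + |t|)) (|x| + |t|), |f s| ≤ M := fun s hs ↦
    (abs_of_nonneg (hf0 s hs)).trans_le (hM (Set.mem_image_of_mem f hs))
  rw [tau1_add_tau1_neg hν hf hfM, tau1_add_tau1_neg hμ hf hfM, ← mul_assoc,
    div_mul_cancel₀ _ (cMu_pos hμ).ne']
  refine mul_le_mul_of_nonneg_left ?_ (cMu_pos hν).le
  refine integral_mono_on_of_le_Ioo (by norm_num)
    (intervalIntegrable_dunklKernel_add_mul hν hf hfM)
    (intervalIntegrable_dunklKernel_add_mul hμ hf hfM) fun θ hθ ↦ ?_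
  refine mul_le_mul_of_nonneg_left ?_
    (dunklKernel_add_dunklKernel_neg_neg_nonneg hf0 (Set.Ioo_subset_Icc_self hθ))
  exact Real.rpow_le_rpow_of_exponent_ge (by nlinarith [hθ.1, hθ.2])
    (sub_le_self _ (sq_nonneg θ)) (sub_le_sub_right hμν 1)

/-- **Comparison of parameters.** For `λ > 0` and continuous `f ≥ 0`,
`(τ_x^{λ+1} f)(t) + (τ_{−x}^{λ+1} f)(t) ≤ ((2λ+1)/(2λ))[(τ_x^{λ} f)(t) + (τ_{−x}^{λ} f)(t)]`. -/
theorem tau1_succ_le_of_nonneg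
    (lam : ℝ) (hlam : 0 < lam) (f : ℝ → ℝ) (hf : Continuous f) (hf0 : ∀ s, 0 ≤ f s)
    (x t : ℝ) :
    tau1 (lam + 1) f x t + tau1 (lam + 1) f (-x) t ≤
      ((2 * lam + 1) / (2 * lam)) * (tau1 lam f x t + tau1 lam f (-x) t) := by
  rw [← cMu_add_one_div_cMu hlam]
  exact tau1_succ_le_of_nonneg_general hlam (le_add_of_nonneg_right zero_le_one) hf.measurable
    (isCompact_Icc.bddAbove_image hf.continuousOn) fun s _ ↦ hf0 s

end
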